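/- Let R be a (unital, associative) ring, I ⊆ R a nilpotent two-sided ideal, and let e_1, …, e_r be a complete orthogonal set of idempotents in R. Suppose f_1, …, f_r is another complete orthogonal set of idempotents in R with f_i − e_i ∈ I for every i. Then the element u := Σ_{i=1}^r f_i e_i is a unit of R satisfying u·e_i = f_i·u for all i; consequently f_i = u e_i u⁻¹ for all i, i.e., the two families of idempotents are conjugate by a unit congruent to 1 modulo I. -/

import Mathlib

/-!
Multiplying `u = ∑ j, f j * e j` by `e i` on the right or by `f i` on the left kills every summand
except `f i * e i`, so `u` intertwines the two families. Since `1 = ∑ i, e i * e i`, we have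
`u - 1 = ∑ i, (f i - e i) * e i ∈ I`. A nil ideal lies in the Jacobson radical, and every element
congruent to `1` modulo the Jacobson radical is a unit.
-/

section Jacobson

variable {R : Type*} [Ring R]

lemma isUnit_of_sub_one_mem_ringJacobson {u : R} (hu : u - 1 ∈ Ring.jacobson R) : IsUnit u := by
  have exists_left_inv {v : R} (hv : v - 1 ∈ Ring.jacobson R) : ∃ w, w * v = 1 := by
    rw [← Ideal.jacobson_bot] at hv
    simpa only [Ideal.mem_bot, sub_eq_zero] using
      Ideal.exists_mul_sub_mem_of_sub_one_mem_jacobson v hv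
  obtain ⟨s, hsu⟩ := exists_left_inv hu
  have hs : s - 1 ∈ Ring.jacobson R := by
    have hs_eq : s - 1 = -s * (u - 1) := by rw [mul_sub, neg_mul, hsu]; noncomm_ring
    rw [hs_eq]
    exact Ideal.mul_mem_left _ _ hu
  obtain ⟨t, hts⟩ := exists_left_inv hs
  have hus : u * s = 1 := left_inv_eq_right_inv hts hsu ▸ hts
  exact ⟨⟨u, s, hus, hsu⟩, rfl⟩

lemma le_ringJacobson_of_forall_isNilpotent {J : Ideal R} (hJ : ∀ x ∈ J, IsNilpotent x) :
    J ≤ Ring.jacobson R := by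
  intro x hx
  rw [← Ideal.jacobson_bot, Ideal.mem_jacobson_iff]
  intro y
  obtain ⟨z, hz⟩ := (hJ (y * x) (J.mul_mem_left y hx)).isUnit_add_one.exists_left_inv
  exact ⟨z, by rw [Ideal.mem_bot, sub_eq_zero, mul_assoc, ← mul_add_one, hz]⟩

end Jacobson

lemma isNilpotent_of_forall_list_prod_eq_zero {M : Type*} [MonoidWithZero M] {s : Set M} {n : ℕ}
    (hs : ∀ l : List M, l.length = n → (∀ x ∈ l, x ∈ s) → l.prod = 0) {x : M} (hx : x ∈ s) :
    IsNilpotent x :=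
  ⟨n, List.prod_replicate n x ▸
    hs _ List.length_replicate fun _ hy ↦ List.eq_of_mem_replicate hy ▸ hx⟩

section Idempotents

variable {R ι : Type*} [Fintype ι] {e f : ι → R}

lemma semiconjBy_sum_mul_of_orthogonalIdempotents [Semiring R] (he : OrthogonalIdempotents e)
    (hf : OrthogonalIdempotents f) (i : ι) : SemiconjBy (∑ j, f j * e j) (e i) (f i) := by
  classical
  calc (∑ j, f j * e j) * e i
    _ = f i * e i := by simp [Finset.sum_mul, mul_assoc, he.mul_eq]
    _ = f i * ∑ j, f j * e j := by simp [Finset.mul_sum, ← mul_assoc, hf.mul_eq]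

lemma sum_mul_sub_one_mem_of_forall_sub_mem [Ring R] {I : TwoSidedIdeal R}
    (he : CompleteOrthogonalIdempotents e) (hfe : ∀ i, f i - e i ∈ I) :
    ∑ i, f i * e i - 1 ∈ I := by
  have sum_sub_one_eq : ∑ i, f i * e i - 1 = ∑ i, (f i - e i) * e i := by
    simp only [sub_mul, Finset.sum_sub_distrib, (he.idem _).eq, he.complete]
  rw [sum_sub_one_eq]
  exact sum_mem fun i _ ↦ I.mul_mem_right _ _ (hfe i)

end Idempotents

theorem stmt_1_general {R ι : Type*} [Ring R] [Fintype ι] {I : TwoSidedIdeal R}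
    (hI : I.asIdeal ≤ Ring.jacobson R) {e f : ι → R}
    (he : CompleteOrthogonalIdempotents e) (hf : OrthogonalIdempotents f)
    (hcong : ∀ i, f i - e i ∈ I) :
    ∃ u : Rˣ, (u : R) = ∑ i, f i * e i ∧ ((u : R) - 1) ∈ I ∧
      (∀ i, (u : R) * e i = f i * (u : R)) ∧
      (∀ i, f i = (u : R) * e i * ((u⁻¹ : Rˣ) : R)) := by
  have hmem : ∑ i, f i * e i - 1 ∈ I := sum_mul_sub_one_mem_of_forall_sub_mem he hcong
  obtain ⟨u, hu⟩ : IsUnit (∑ i, f i * e i) :=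
    isUnit_of_sub_one_mem_ringJacobson (hI (TwoSidedIdeal.mem_asIdeal.mpr hmem))
  have hconj (i : ι) : SemiconjBy (u : R) (e i) (f i) :=
    hu ▸ semiconjBy_sum_mul_of_orthogonalIdempotents he.toOrthogonalIdempotents hf i
  exact ⟨u, hu, hu ▸ hmem, fun i ↦ (hconj i).eq,
    fun i ↦ u.eq_mul_inv_iff_mul_eq.mpr (hconj i).eq.symm⟩

/-- **Complete orthogonal sets of idempotents congruent modulo a nilpotent two-sided
ideal are conjugate.**  If `I` is a nilpotent two-sided ideal of a ring `R` and
`e`, `f` are complete orthogonal sets of idempotents with `f i - e i ∈ I` for all `i`,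
then `u = ∑ i, f i * e i` is a unit with `u - 1 ∈ I`, `u * e i = f i * u` and
`f i = u * e i * u⁻¹` for all `i`. -/
theorem stmt_1 (R : Type*) [Ring R] (I : TwoSidedIdeal R)
    (hnil : ∃ n : ℕ, 1 ≤ n ∧ ∀ l : List R, l.length = n → (∀ x ∈ l, x ∈ I) → l.prod = 0)
    (r : ℕ) (e f : Fin r → R)
    (he : CompleteOrthogonalIdempotents e) (hf : CompleteOrthogonalIdempotents f)
    (hcong : ∀ i, f i - e i ∈ I) :
    ∃ u : Rˣ, (u : R) = ∑ i, f i * e i ∧ ((u : R) - 1) ∈ I ∧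
      (∀ i, (u : R) * e i = f i * (u : R)) ∧
      (∀ i, f i = (u : R) * e i * ((u⁻¹ : Rˣ) : R)) := by
  obtain ⟨n, -, hn⟩ := hnil
  exact stmt_1_general (le_ringJacobson_of_forall_isNilpotent fun x hx ↦
    isNilpotent_of_forall_list_prod_eq_zero (s := I) hn (TwoSidedIdeal.mem_asIdeal.mp hx))
    he hf.toOrthogonalIdempotents hcong
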